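/- Let p be a prime, m a natural number, and let q ≥ 1 and k be natural numbers with 0 ≤ k < p^m. Then Γ(p^m, p^m·(q−1) + k, 0) is congruent to q modulo p, i.e. the p-adic norm of the rational number Γ(p^m, p^m·(q−1) + k, 0) − q is at most 1/p. -/

import Mathlib

/-- `mAngle p m k k'` is the number `⟨k, k'⟩ = q!/(q'!·q''!)` where
`q = ⌊k/p^m⌋`, `q' = ⌊k'/p^m⌋` and `q'' = ⌊(k-k')/p^m⌋`. -/
def mAngle (p m k k' : ℕ) : ℚ :=
  (Nat.factorial (k / p ^ m) : ℚ) /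
    ((Nat.factorial (k' / p ^ m) : ℚ) * (Nat.factorial ((k - k') / p ^ m) : ℚ))

/-- `mPartialBinom p m k k'` is the level-`m` partial binomial
`⦃k, k'⦄ = C(k, k') / ⟨k, k'⟩`. -/
def mPartialBinom (p m k k' : ℕ) : ℚ :=
  (Nat.choose k k' : ℚ) / mAngle p m k k'

/-- `mGamma p m a b c` is the number `Γ(a,b,c) = ⦃a+b+c, a⦄·⦃b+c, b⦄·⟨a+b, a⟩·⟨a+c, a⟩`. -/
def mGamma (p m a b c : ℕ) : ℚ :=
  mPartialBinom p m (a + b + c) a * mPartialBinom p m (b + c) b *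
    mAngle p m (a + b) a * mAngle p m (a + c) a

/-!
`⦃k, k'⦄ · ⟨k, k'⟩ = C(k, k')`, and both symbols are `1` when `k' = k`, so
`Γ(a, b, 0) = C(a + b, a)`. The last `m` base-`p` digits of `p ^ m * b` vanish, so Lucas' theorem
gives `C(n, p ^ m * b) ≡ C(⌊n / p ^ m⌋, b)` modulo `p`. Here `b = 1` and `n = p ^ m * q + k`.
-/

theorem mAngle_ne_zero (p m k k' : ℕ) : mAngle p m k k' ≠ 0 := by
  unfold mAngle
  positivity

theorem mAngle_self (p m k : ℕ) : mAngle p m k k = 1 := by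
  simp [mAngle, Nat.factorial_ne_zero]

theorem mPartialBinom_mul_mAngle (p m k k' : ℕ) :
    mPartialBinom p m k k' * mAngle p m k k' = k.choose k' :=
  div_mul_cancel₀ _ (mAngle_ne_zero p m k k')

theorem mPartialBinom_self (p m k : ℕ) : mPartialBinom p m k k = 1 := by
  simp [mPartialBinom, mAngle_self]

theorem mGamma_zero_right (p m a b : ℕ) : mGamma p m a b 0 = (a + b).choose a := by
  simp only [mGamma, add_zero, mPartialBinom_self, mAngle_self, mul_one,
    mPartialBinom_mul_mAngle]

theorem choose_pow_mul_modEq_choose_div (p m n b : ℕ) [Fact p.Prime] :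
    n.choose (p ^ m * b) ≡ (n / p ^ m).choose b [ZMOD p] := by
  have digit_eq_zero : ∀ i ∈ Finset.range m, p ^ m * b / p ^ i % p = 0 := by
    intro i hi
    refine Nat.mod_eq_zero_of_dvd (Nat.dvd_div_of_mul_dvd ?_)
    rw [← pow_succ]
    exact (pow_dvd_pow p (Finset.mem_range.mp hi)).mul_right b
  have lucas := Choose.choose_modEq_choose_mul_prod_range_choose (p := p) (n := n)
    (k := p ^ m * b) m
  rwa [Finset.prod_eq_one fun i hi ↦ by simp [digit_eq_zero i hi],
    Nat.mul_div_cancel_left b (NeZero.pos (p ^ m)), Nat.cast_one, mul_one] at lucas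

theorem padicNorm_sub_le_iff_modEq (p n : ℕ) [Fact p.Prime] (a b : ℤ) :
    padicNorm p (a - b) ≤ (p : ℚ) ^ (-n : ℤ) ↔ a ≡ b [ZMOD (p ^ n : ℕ)] := by
  rw [← Int.cast_sub, ← padicNorm.dvd_iff_norm_le, ← Int.modEq_iff_dvd, Int.modEq_comm]

theorem gamma_eq_q_mod_p (p m q k : ℕ) (hp : p.Prime) (hq : 1 ≤ q) (hk : k < p ^ m) :
    padicNorm p (mGamma p m (p ^ m) (p ^ m * (q - 1) + k) 0 - (q : ℚ)) ≤ 1 / p := by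
  have : Fact p.Prime := ⟨hp⟩
  have sum_eq : p ^ m + (p ^ m * (q - 1) + k) = p ^ m * q + k := by
    rw [← add_assoc, ← mul_one_add, Nat.add_sub_cancel' hq]
  have div_eq : (p ^ m * q + k) / p ^ m = q := by
    rw [Nat.mul_add_div (NeZero.pos (p ^ m)), Nat.div_eq_of_lt hk, add_zero]
  have choose_modEq : (p ^ m * q + k).choose (p ^ m) ≡ q [ZMOD p] := by
    simpa only [div_eq, mul_one, Nat.choose_one_right] using
      choose_pow_mul_modEq_choose_div p m (p ^ m * q + k) 1
  have norm_le := (padicNorm_sub_le_iff_modEq p 1 _ _).mpr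
    (by simpa only [pow_one] using choose_modEq)
  rw [mGamma_zero_right, sum_eq]
  simpa only [Int.cast_natCast, Nat.cast_one, zpow_neg_one, one_div] using norm_le
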